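/- For all annotation-free extended Plebeia nodes n₁ and n₂ that both satisfy the shape invariants (SI1), (SI2), and (SI6), if n₁ ≠ n₂ and MH(n₁) = MH(n₂), then either there exist byte strings x₁ ≠ x₂ with first222(B'(x₁)) = first222(B'(x₂)), or there exists a byte string y with first222(B'(y)) equal to the 28-byte all-zero string. -/

import Mathlib

/-- A side is `L` or `R`. -/
inductive Side : Type
  | L | R
deriving DecidableEq, Repr

/-- A key is a list of sides. -/
abbrev Key := List Side

/-- The strict order `L < R` on sides. -/
def Side.lt : Side → Side → Prop := fun a b => a = Side.L ∧ b = Side.R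

/-- The strict lexicographic order on keys induced by `L < R`. -/
def keyLt : Key → Key → Prop := List.Lex Side.lt

/-- A list of keys is prefix-free: for any two distinct keys in it,
neither is a prefix of the other. -/
def PrefixFreeList (ks : List Key) : Prop :=
  List.Pairwise (fun a b => ¬ a <+: b ∧ ¬ b <+: a) ks

/-- A set of keys is prefix-free. -/
def PrefixFreeSet (S : Set Key) : Prop :=
  ∀ a ∈ S, ∀ b ∈ S, a ≠ b → ¬ a <+: b

/-- A list of keys is strictly increasing in the lexicographic order. -/
def SortedKeys (ks : List Key) : Prop := List.Pairwise keyLt ks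

/-- Key list of an association list is prefix-free and strictly increasing. -/
def GoodKeyList (ks : List Key) : Prop := PrefixFreeList ks ∧ SortedKeys ks

/-- Prepend the key `s` to the key of every entry. -/
def prependAll {β : Type _} (s : Key) (l : List (Key × β)) : List (Key × β) :=
  l.map (fun e => (s ++ e.1, e.2))

/-- `lookup l k` is `some` of the value of the first entry of `l` with key `k`. -/
def lookupA {β : Type _} (l : List (Key × β)) (k : Key) : Option β :=
  (l.find? (fun e => decide (e.1 = k))).map Prod.snd
/-- Annotation-free extended Plebeia nodes over a value type `α`. -/
inductive ANode (α : Type) : Type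
  | leaf : α → ANode α
  | branch : ANode α → ANode α → ANode α
  | extender : Key → ANode α → ANode α
  | bud : Option (ANode α) → ANode α

variable {α : Type}

def ANode.isExtender : ANode α → Prop
  | .extender _ _ => True
  | _ => False

def ANode.isBud : ANode α → Prop
  | .bud _ => True
  | _ => False

def ANode.isLeaf : ANode α → Prop
  | .leaf _ => True
  | _ => False

/-- Shape invariants (SI1), (SI2), (SI6) at every subtree. -/
def ANode.shapeInv : ANode α → Prop
  | .leaf _ => True
  | .branch l r => l.shapeInv ∧ r.shapeInv
  | .extender s n => (¬ n.isExtender) ∧ s ≠ [] ∧ n.shapeInv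
  | .bud none => True
  | .bud (some n) => (¬ n.isBud) ∧ (¬ n.isLeaf) ∧ n.shapeInv
/-- Byte strings: lists of 8-bit bytes. -/
abbrev Bytes := List UInt8

/-- Replace the last two bits of the last byte of `b` by the 2-bit tag `t`. -/
def setLast2 (b : Bytes) (t : UInt8) : Bytes :=
  match b.getLast? with
  | none => []
  | some x => b.dropLast ++ [(x &&& 0xfc) ||| (t &&& 0x3)]

/-- `first222 b` sets the last two bits of `b` to 0. -/
def first222 (b : Bytes) : Bytes := setLast2 b 0

/-- `hash222 B' s t`: the 28-byte string whose first 222 bits agree with those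
of `B' s` and whose last two bits are the 2-bit tag `t`. -/
def hash222 (B' : Bytes → Bytes) (s : Bytes) (t : UInt8) : Bytes :=
  setLast2 (B' s) t

/-- The Merkle hash of an annotation-free extended Plebeia node, relative to
the hash `B'`, the key encoding `keyBytes` and the length encoding `enc`. -/
def MH (B' : Bytes → Bytes) (keyBytes : Key → Bytes) (enc : ℕ → Bytes) :
    ANode Bytes → Bytes
  | .leaf v => hash222 B' v 2           -- tag 10
  | .branch l r =>
      hash222 B'
        (MH B' keyBytes enc l ++ MH B' keyBytes enc r ++
          enc (MH B' keyBytes enc r).length) 0   -- tag 00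
  | .extender s n => MH B' keyBytes enc n ++ keyBytes s
  | .bud none => List.replicate 28 0
  | .bud (some n) => hash222 B' (MH B' keyBytes enc n) 3   -- tag 11

/-!
Assume that no collision of `first222 ∘ B'`, and no preimage of the zero string under it, occurs
among the strings that are actually hashed in computing the two Merkle hashes. Then a hash
determines its node. Its length tells whether the root is an extender. For any other root the zero
string singles out the empty bud, and the last two bits tell the remaining constructors apart. Once
the constructors agree, equal hashes have equal inputs, so the children have equal hashes, and one
concludes by induction.

Restricting to the strings actually hashed is essential: `B'` maps infinitely many strings to
28-byte ones, so by the pigeonhole principle some collision always exists, whatever `n₁` and `n₂`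
are. `stmt15_general` locates the offending strings.
-/

section SetLast2

theorem uint8_and_or_distrib_right (a b c : UInt8) :
    (a ||| b) &&& c = (a &&& c) ||| (b &&& c) :=
  UInt8.toBitVec_inj.1 BitVec.and_or_distrib_right

theorem uint8_or_and_masks_and_right (a b : UInt8) {m k : UInt8} (hmk : m &&& k = 0) :
    ((a &&& m) ||| (b &&& k)) &&& k = b &&& k := by
  rw [uint8_and_or_distrib_right, UInt8.and_assoc, UInt8.and_assoc, hmk, UInt8.and_self,
    UInt8.and_zero, UInt8.zero_or]

theorem setLast2_append_singleton (l : Bytes) (x t : UInt8) :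
    setLast2 (l ++ [x]) t = l ++ [(x &&& 0xfc) ||| (t &&& 0x3)] := by
  simp only [setLast2, List.getLast?_concat, List.dropLast_concat]

theorem length_setLast2 (b : Bytes) (t : UInt8) : (setLast2 b t).length = b.length := by
  rcases b.eq_nil_or_concat' with rfl | ⟨l, x, rfl⟩
  · rfl
  · simp only [setLast2_append_singleton, List.length_append, List.length_singleton]

theorem setLast2_setLast2 (b : Bytes) (t u : UInt8) :
    setLast2 (setLast2 b t) u = setLast2 b u := by
  rcases b.eq_nil_or_concat' with rfl | ⟨l, x, rfl⟩
  · rfl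
  · have hmask : ((x &&& 0xfc) ||| (t &&& 0x3)) &&& 0xfc = x &&& 0xfc := by
      rw [UInt8.or_comm, uint8_or_and_masks_and_right t x (by decide)]
    simp only [setLast2_append_singleton, hmask]

theorem and_three_eq_of_setLast2_eq {b c : Bytes} (hb : b ≠ []) (hc : c ≠ []) {t u : UInt8}
    (h : setLast2 b t = setLast2 c u) : t &&& 3 = u &&& 3 := by
  obtain ⟨l, x, rfl⟩ := b.eq_nil_or_concat'.resolve_left hb
  obtain ⟨m, y, rfl⟩ := c.eq_nil_or_concat'.resolve_left hc
  rw [setLast2_append_singleton, setLast2_append_singleton] at h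
  have hlast : (x &&& 0xfc) ||| (t &&& 0x3) = (y &&& 0xfc) ||| (u &&& 0x3) :=
    List.singleton_inj.1 (List.append_inj' h rfl).2
  rw [← uint8_or_and_masks_and_right x t (m := 0xfc) (by decide), hlast,
    uint8_or_and_masks_and_right y u (by decide)]

end SetLast2

section Hash222

variable {B' : Bytes → Bytes} {x y : Bytes} {t u : UInt8}

theorem length_hash222 (B' : Bytes → Bytes) (x : Bytes) (t : UInt8) :
    (hash222 B' x t).length = (B' x).length :=
  length_setLast2 (B' x) t

theorem first222_hash222 (B' : Bytes → Bytes) (x : Bytes) (t : UInt8) :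
    first222 (hash222 B' x t) = first222 (B' x) :=
  setLast2_setLast2 (B' x) t 0

theorem first222_eq_of_hash222_eq (h : hash222 B' x t = hash222 B' y u) :
    first222 (B' x) = first222 (B' y) := by
  rw [← first222_hash222 B' x t, h, first222_hash222]

theorem hash222_ne_zeros (hx : first222 (B' x) ≠ List.replicate 28 0) :
    hash222 B' x t ≠ List.replicate 28 0 := by
  intro h
  rw [← first222_hash222 B' x t, h] at hx
  exact hx (by decide)

theorem hash222_ne_hash222 (hB : ∀ s, B' s ≠ []) (htu : t &&& 3 ≠ u &&& 3) :
    hash222 B' x t ≠ hash222 B' y u :=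
  fun h => htu (and_three_eq_of_setLast2_eq (hB x) (hB y) h)

end Hash222

namespace ANode

/-- The shape invariants (SI1) and (SI2) at every subtree. Stated as an inductive predicate, so that
induction on it replaces induction on nodes, which are a nested inductive type. -/
inductive ExtenderInv : ANode α → Prop
  | leaf (v : α) : ExtenderInv (.leaf v)
  | branch {l r : ANode α} : ExtenderInv l → ExtenderInv r → ExtenderInv (.branch l r)
  | extender {s : Key} {n : ANode α} :
      ¬ n.isExtender → s ≠ [] → ExtenderInv n → ExtenderInv (.extender s n)
  | emptyBud : ExtenderInv (.bud none)
  | bud {n : ANode α} : ExtenderInv n → ExtenderInv (.bud (some n))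

theorem shapeInv.extenderInv : ∀ {n : ANode α}, n.shapeInv → n.ExtenderInv
  | .leaf v, _ => .leaf v
  | .branch _ _, ⟨hl, hr⟩ => .branch hl.extenderInv hr.extenderInv
  | .extender _ _, ⟨hext, hs, hn⟩ => .extender hext hs hn.extenderInv
  | .bud none, _ => .emptyBud
  | .bud (some _), ⟨_, _, hn⟩ => .bud hn.extenderInv

/-- Two nodes have the same root constructor, where the empty bud and the buds with a child count as
two different constructors. -/
inductive SameRoot : ANode α → ANode α → Prop
  | leaf (v w : α) : SameRoot (.leaf v) (.leaf w)
  | branch (l r l' r' : ANode α) : SameRoot (.branch l r) (.branch l' r')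
  | extender (s t : Key) (n m : ANode α) : SameRoot (.extender s n) (.extender t m)
  | emptyBud : SameRoot (.bud none) (.bud none)
  | bud (n m : ANode α) : SameRoot (.bud (some n)) (.bud (some m))

end ANode

section MerkleHash

variable {B' : Bytes → Bytes} {keyBytes : Key → Bytes} {enc : ℕ → Bytes} {S : Set Bytes}
  {n n₁ n₂ : ANode Bytes}

/-- The set of byte strings to which `B'` is applied in the computation of the Merkle hash of a
node. -/
def hashInputs (B' : Bytes → Bytes) (keyBytes : Key → Bytes) (enc : ℕ → Bytes) :
    ANode Bytes → Set Bytes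
  | .leaf v => {v}
  | .branch l r =>
      insert
        (MH B' keyBytes enc l ++ MH B' keyBytes enc r ++ enc (MH B' keyBytes enc r).length)
        (hashInputs B' keyBytes enc l ∪ hashInputs B' keyBytes enc r)
  | .extender _ n => hashInputs B' keyBytes enc n
  | .bud none => ∅
  | .bud (some n) => insert (MH B' keyBytes enc n) (hashInputs B' keyBytes enc n)

theorem length_MH_of_not_isExtender (hB : ∀ s, (B' s).length = 28) (hn : ¬ n.isExtender) :
    (MH B' keyBytes enc n).length = 28 := by
  rcases n with _ | _ | _ | _ | _
  case extender => exact absurd trivial hn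
  all_goals simp only [MH, length_hash222, hB, List.length_replicate]

theorem isExtender_iff_lt_length_MH (hB : ∀ s, (B' s).length = 28)
    (hkne : ∀ s, s ≠ [] → keyBytes s ≠ []) (hn : n.ExtenderInv) :
    n.isExtender ↔ 28 < (MH B' keyBytes enc n).length := by
  refine ⟨fun hext => ?_, fun hlt => ?_⟩
  · rcases hn with _ | _ | ⟨hchild, hs, _⟩ | _ | _
    case extender =>
      rw [MH, List.length_append, length_MH_of_not_isExtender hB hchild]
      exact Nat.lt_add_of_pos_right (List.length_pos_iff.2 (hkne _ hs))
    all_goals exact hext.elim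
  · by_contra hext
    exact hlt.ne' (length_MH_of_not_isExtender hB hext)

theorem sameRoot_of_MH_eq (hB : ∀ s, (B' s).length = 28)
    (hkne : ∀ s, s ≠ [] → keyBytes s ≠ [])
    (hzero : ∀ y ∈ S, first222 (B' y) ≠ List.replicate 28 0)
    (h₁ : n₁.ExtenderInv) (h₂ : n₂.ExtenderInv)
    (hS₁ : hashInputs B' keyBytes enc n₁ ⊆ S) (hS₂ : hashInputs B' keyBytes enc n₂ ⊆ S)
    (h : MH B' keyBytes enc n₁ = MH B' keyBytes enc n₂) : n₁.SameRoot n₂ := by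
  have hB_ne : ∀ s, B' s ≠ [] := fun s => List.ne_nil_of_length_pos (by simp [hB])
  have hext : n₁.isExtender ↔ n₂.isExtender := by
    rw [isExtender_iff_lt_length_MH hB hkne h₁, h, ← isExtender_iff_lt_length_MH hB hkne h₂]
  cases h₁ <;> cases h₂ <;> simp only [MH, hashInputs] at h hS₁ hS₂
  all_goals first
    | constructor
    | exact (hext.1 trivial).elim
    | exact (hext.2 trivial).elim
    | exact absurd h (hash222_ne_hash222 hB_ne (by decide))
    | exact absurd h (hash222_ne_zeros (hzero _ (hS₁ (by simp))))
    | exact absurd h.symm (hash222_ne_zeros (hzero _ (hS₂ (by simp))))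

theorem MH_injOn (hB : ∀ s, (B' s).length = 28) (hkinj : Function.Injective keyBytes)
    (hkne : ∀ s, s ≠ [] → keyBytes s ≠ [])
    (henc : Function.Injective (fun p : Bytes × Bytes => p.1 ++ p.2 ++ enc p.2.length))
    (hinj : S.InjOn (fun x => first222 (B' x)))
    (hzero : ∀ y ∈ S, first222 (B' y) ≠ List.replicate 28 0) :
    {n | n.ExtenderInv ∧ hashInputs B' keyBytes enc n ⊆ S}.InjOn (MH B' keyBytes enc) := by
  rintro n₁ ⟨h₁, hS₁⟩ n₂ ⟨h₂, hS₂⟩ h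
  have hash_inj {x y : Bytes} {t : UInt8} (hx : x ∈ S) (hy : y ∈ S)
      (hxy : hash222 B' x t = hash222 B' y t) : x = y :=
    hinj hx hy (first222_eq_of_hash222_eq hxy)
  induction h₁ generalizing n₂ with
  | leaf v =>
    cases sameRoot_of_MH_eq hB hkne hzero (.leaf v) h₂ hS₁ hS₂ h
    simp only [hashInputs, Set.singleton_subset_iff] at hS₁ hS₂
    simp only [MH] at h
    rw [hash_inj hS₁ hS₂ h]
  | branch hl hr ihl ihr =>
    cases sameRoot_of_MH_eq hB hkne hzero (.branch hl hr) h₂ hS₁ hS₂ h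
    obtain _ | ⟨hl', hr'⟩ := h₂
    simp only [hashInputs, Set.insert_subset_iff, Set.union_subset_iff] at hS₁ hS₂
    simp only [MH] at h
    obtain ⟨hleft, hright⟩ := Prod.mk.inj (@henc (_, _) (_, _) (hash_inj hS₁.1 hS₂.1 h))
    rw [ihl hS₁.2.1 hl' hS₂.2.1 hleft, ihr hS₁.2.2 hr' hS₂.2.2 hright]
  | extender hext hs hn ih =>
    cases sameRoot_of_MH_eq hB hkne hzero (.extender hext hs hn) h₂ hS₁ hS₂ h
    obtain _ | _ | ⟨hext', _, hn'⟩ := h₂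
    simp only [MH] at h
    obtain ⟨hchild, hkey⟩ := List.append_inj h <|
      (length_MH_of_not_isExtender hB hext).trans (length_MH_of_not_isExtender hB hext').symm
    rw [ih hS₁ hn' hS₂ hchild, hkinj hkey]
  | emptyBud =>
    cases sameRoot_of_MH_eq hB hkne hzero .emptyBud h₂ hS₁ hS₂ h
    rfl
  | bud hn ih =>
    cases sameRoot_of_MH_eq hB hkne hzero (.bud hn) h₂ hS₁ hS₂ h
    obtain _ | _ | _ | _ | hn' := h₂
    simp only [hashInputs, Set.insert_subset_iff] at hS₁ hS₂
    simp only [MH] at h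
    rw [ih hS₁.2 hn' hS₂.2 (hash_inj hS₁.1 hS₂.1 h)]

end MerkleHash

theorem stmt15_general (B' : Bytes → Bytes) (hB : ∀ s : Bytes, (B' s).length = 28)
    (keyBytes : Key → Bytes) (hkinj : Function.Injective keyBytes)
    (hkne : ∀ s : Key, s ≠ [] → keyBytes s ≠ [])
    (enc : ℕ → Bytes)
    (henc : Function.Injective
      (fun p : Bytes × Bytes => p.1 ++ p.2 ++ enc p.2.length))
    (n₁ n₂ : ANode Bytes) (h₁ : n₁.ExtenderInv) (h₂ : n₂.ExtenderInv)
    (hne : n₁ ≠ n₂) (hmh : MH B' keyBytes enc n₁ = MH B' keyBytes enc n₂) :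
    (∃ x₁ ∈ hashInputs B' keyBytes enc n₁ ∪ hashInputs B' keyBytes enc n₂,
      ∃ x₂ ∈ hashInputs B' keyBytes enc n₁ ∪ hashInputs B' keyBytes enc n₂,
        x₁ ≠ x₂ ∧ first222 (B' x₁) = first222 (B' x₂)) ∨
    (∃ y ∈ hashInputs B' keyBytes enc n₁ ∪ hashInputs B' keyBytes enc n₂,
      first222 (B' y) = List.replicate 28 0) := by
  by_contra! ⟨hcoll, hzero⟩
  have hinj : (hashInputs B' keyBytes enc n₁ ∪ hashInputs B' keyBytes enc n₂).InjOn
      (fun x => first222 (B' x)) :=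
    fun x hx y hy hxy => by_contra fun hne' => hcoll x hx y hy hne' hxy
  exact hne (MH_injOn hB hkinj hkne henc hinj hzero
    ⟨h₁, Set.subset_union_left⟩ ⟨h₂, Set.subset_union_right⟩ hmh)

/-- from any collision of the Merkle hash on shape-invariant
nodes one gets either a collision of `first222 ∘ B'` or a preimage of the
28-byte all-zero string under `first222 ∘ B'`. -/
theorem stmt15 (B' : Bytes → Bytes) (hB : ∀ s : Bytes, (B' s).length = 28)
    (keyBytes : Key → Bytes) (hkinj : Function.Injective keyBytes)
    (hkne : ∀ s : Key, s ≠ [] → keyBytes s ≠ [])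
    (enc : ℕ → Bytes)
    (henc : Function.Injective
      (fun p : Bytes × Bytes => p.1 ++ p.2 ++ enc p.2.length))
    (n₁ n₂ : ANode Bytes) (h₁ : n₁.shapeInv) (h₂ : n₂.shapeInv)
    (hne : n₁ ≠ n₂) (hmh : MH B' keyBytes enc n₁ = MH B' keyBytes enc n₂) :
    (∃ x₁ x₂ : Bytes, x₁ ≠ x₂ ∧ first222 (B' x₁) = first222 (B' x₂)) ∨
    (∃ y : Bytes, first222 (B' y) = List.replicate 28 0) := by
  exact (stmt15_general B' hB keyBytes hkinj hkne enc henc n₁ n₂ h₁.extenderInv h₂.extenderInv hne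
    hmh).imp (fun ⟨x₁, _, x₂, _, h⟩ => ⟨x₁, x₂, h⟩) (fun ⟨y, _, h⟩ => ⟨y, h⟩)
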